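/- Let V₁ and W be finite-dimensional real vector spaces, where W carries a nondegenerate symmetric bilinear form of type (r, t) with r ≤ 5. Let σ : V₁ × V₁ → W be a nonzero flat symmetric bilinear map. If dim N(σ) < dim V₁ − (r + t), then S(σ) is a degenerate subspace of W. -/

import Mathlib

open Module Submodule

/-- A nondegenerate symmetric bilinear form `B` on `W` has type `(r, t)` if `W` has an
orthogonal basis consisting of `r` vectors of negative square length and `t` vectors of
positive square length. -/
def BilinFormHasType {W : Type*} [AddCommGroup W] [Module ℝ W]
    (B : LinearMap.BilinForm ℝ W) (r t : ℕ) : Prop :=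
  ∃ b : Basis (Fin r ⊕ Fin t) ℝ W,
    (∀ i j, i ≠ j → B (b i) (b j) = 0) ∧
    (∀ i, B (b (Sum.inl i)) (b (Sum.inl i)) < 0) ∧
    (∀ j, 0 < B (b (Sum.inr j)) (b (Sum.inr j)))

namespace FlatAux

/-- lower semicontinuity of the rank along a line. -/
lemma rank_poly {A E : Type*} [AddCommGroup A] [Module ℝ A] [FiniteDimensional ℝ A]
    [AddCommGroup E] [Module ℝ E] [FiniteDimensional ℝ E] (L₀ L₁ : A →ₗ[ℝ] E) :
    {t : ℝ | ¬ finrank ℝ (LinearMap.range L₀) ≤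
      finrank ℝ (LinearMap.range (L₀ + t • L₁))}.Finite := by
  classical
  obtain ⟨s, hs⟩ := L₀.rangeRestrict.exists_rightInverse_of_surjective L₀.range_rangeRestrict
  obtain ⟨p, hp⟩ := (LinearMap.range L₀).subtype.exists_leftInverse_of_injective
    (Submodule.ker_subtype _)
  set M₁ := p ∘ₗ L₁ ∘ₗ s with hM₁
  have h0 : p ∘ₗ L₀ ∘ₗ s = LinearMap.id := by
    ext x
    have h1 := LinearMap.congr_fun hs x
    have h2 : L₀ (s x) = (x : E) := by
      have := congrArg Subtype.val h1
      simpa using this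
    have h3 := LinearMap.congr_fun hp x
    simp only [LinearMap.comp_apply, h2]
    simpa using congrArg Subtype.val h3
  let b := finBasis ℝ (LinearMap.range L₀)
  let m := LinearMap.toMatrix b b M₁
  let q : Polynomial ℝ := (1 + (Polynomial.X : Polynomial ℝ) • m.map Polynomial.C).det
  have hq : ∀ t : ℝ, q.eval t = LinearMap.det (p ∘ₗ (L₀ + t • L₁) ∘ₗ s) := by
    intro t
    have e1 : p ∘ₗ (L₀ + t • L₁) ∘ₗ s = LinearMap.id + t • M₁ := by
      rw [← h0, hM₁]; ext x; simp
    rw [e1, ← LinearMap.det_toMatrix b]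
    have e2 : q.eval t = ((Polynomial.evalRingHom t).mapMatrix
      (1 + (Polynomial.X : Polynomial ℝ) • m.map Polynomial.C)).det := by
      rw [← RingHom.map_det]; rfl
    rw [e2]
    congr 1
    ext i j
    simp [m, Matrix.one_apply]
    split_ifs <;> simp [mul_comm]
  have hq0 : q ≠ 0 := by
    intro h
    have := hq 0
    rw [h, zero_smul, add_zero, h0] at this
    simp at this
  refine (q.roots.toFinset.finite_toSet).subset ?_
  intro t ht
  simp only [Finset.mem_coe, Multiset.mem_toFinset, Polynomial.mem_roots hq0, Polynomial.IsRoot]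
  by_contra hne
  apply ht
  rw [hq] at hne
  have hk : LinearMap.ker (p ∘ₗ (L₀ + t • L₁) ∘ₗ s) = ⊥ := by
    by_contra hk
    exact hne (LinearMap.det_eq_zero_iff_ker_ne_bot.2 hk)
  have hr : finrank ℝ (LinearMap.range (p ∘ₗ (L₀ + t • L₁) ∘ₗ s)) =
      finrank ℝ (LinearMap.range L₀) :=
    LinearMap.finrank_range_of_inj (LinearMap.ker_eq_bot.1 hk)
  rw [← hr, LinearMap.range_comp]
  refine (Submodule.finrank_map_le _ _).trans ?_
  exact Submodule.finrank_mono (LinearMap.range_comp_le_range _ _)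

/-- The lemma of Moore. -/
lemma moore {A E : Type*} [AddCommGroup A] [Module ℝ A] [FiniteDimensional ℝ A]
    [AddCommGroup E] [Module ℝ E] [FiniteDimensional ℝ E] (L₀ L₁ : A →ₗ[ℝ] E)
    (h : ∀ t : ℝ, finrank ℝ (LinearMap.range (L₀ + t • L₁)) ≤ finrank ℝ (LinearMap.range L₀))
    (n : A) (hn : L₀ n = 0) : L₁ n ∈ LinearMap.range L₀ := by
  by_contra hne
  let M₀ : (A × ℝ) →ₗ[ℝ] E := L₀.coprod (LinearMap.toSpanSingleton ℝ E (L₁ n))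
  let M₁ : (A × ℝ) →ₗ[ℝ] E := L₁.coprod 0
  have hfin := (rank_poly M₀ M₁).union (Set.finite_singleton (0:ℝ))
  obtain ⟨t, ht⟩ := hfin.infinite_compl.nonempty
  simp only [Set.mem_compl_iff, Set.mem_union, Set.mem_ofPred_eq, not_or, not_not,
    Set.mem_singleton_iff] at ht
  obtain ⟨ht1, ht0⟩ := ht
  have h1 : LinearMap.range (M₀ + t • M₁) ≤ LinearMap.range (L₀ + t • L₁) := by
    rintro _ ⟨⟨a, c⟩, rfl⟩
    refine ⟨a + (c * t⁻¹) • n, ?_⟩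
    simp [M₀, M₁, hn, smul_smul]
    rw [show t * (c * t⁻¹) = c by field_simp]
    abel
  have h2 : LinearMap.range L₀ < LinearMap.range M₀ := by
    refine lt_of_le_of_ne ?_ ?_
    · rintro _ ⟨a, rfl⟩
      exact ⟨(a, 0), by simp [M₀]⟩
    · intro he
      apply hne
      rw [he]
      exact ⟨(0, 1), by simp [M₀]⟩
  have := Submodule.finrank_lt_finrank_of_lt h2
  have := Submodule.finrank_mono h1
  have := h t
  omega

/-- A property of points which holds generically. -/
def Gen {V : Type*} [AddCommGroup V] [Module ℝ V] (P : V → Prop) : Prop :=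
  (∃ x, P x) ∧ ∀ x y, P x → {t : ℝ | ¬ P (x + t • y)}.Finite

lemma Gen.and {V : Type*} [AddCommGroup V] [Module ℝ V] {P Q : V → Prop}
    (hP : Gen P) (hQ : Gen Q) : Gen (fun x => P x ∧ Q x) := by
  obtain ⟨⟨x, hx⟩, hP⟩ := hP
  obtain ⟨⟨y, hy⟩, hQ⟩ := hQ
  refine ⟨?_, ?_⟩
  · have h1 := hP x (y - x) hx
    have h2 := hQ y (x - y) hy
    have h3 : ((fun t : ℝ => 1 - t) ⁻¹' {t : ℝ | ¬ Q (y + t • (x - y))}).Finite :=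
      h2.preimage (fun a _ b _ hab => by simpa using hab)
    obtain ⟨t, ht⟩ := (h1.union h3).infinite_compl.nonempty
    simp only [Set.mem_compl_iff, Set.mem_union, Set.mem_ofPred_eq, not_or, not_not,
      Set.mem_preimage] at ht
    refine ⟨x + t • (y - x), ht.1, ?_⟩
    have e : x + t • (y - x) = y + (1 - t) • (x - y) := by module
    rw [e]; exact ht.2
  · rintro x y ⟨h1, h2⟩
    refine ((hP x y h1).union (hQ x y h2)).subset ?_
    intro t ht
    simp only [Set.mem_ofPred_eq, Set.mem_union] at ht ⊢
    tauto

lemma gen_rank {V A E : Type*} [AddCommGroup V] [Module ℝ V]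
    [AddCommGroup A] [Module ℝ A] [FiniteDimensional ℝ A]
    [AddCommGroup E] [Module ℝ E] [FiniteDimensional ℝ E] (M : V →ₗ[ℝ] A →ₗ[ℝ] E) :
    Gen (fun x => ∀ y, finrank ℝ (LinearMap.range (M y)) ≤ finrank ℝ (LinearMap.range (M x))) := by
  refine ⟨?_, ?_⟩
  · have hb : BddAbove (Set.range fun y => finrank ℝ (LinearMap.range (M y))) := by
      refine ⟨finrank ℝ E, ?_⟩
      rintro _ ⟨y, rfl⟩
      exact Submodule.finrank_le _
    obtain ⟨x, hx⟩ := Nat.sSup_mem (Set.range_nonempty _) hb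
    refine ⟨x, fun y => ?_⟩
    simp only at hx
    rw [hx]
    exact le_csSup hb ⟨y, rfl⟩
  · intro x y hx
    refine (rank_poly (M x) (M y)).subset ?_
    intro t ht h
    apply ht
    intro z
    refine (hx z).trans ?_
    rw [map_add, map_smul]
    exact h

lemma gen_diag {V E : Type*} [AddCommGroup V] [Module ℝ V]
    [AddCommGroup E] [Module ℝ E] [FiniteDimensional ℝ E] (φ : V →ₗ[ℝ] V →ₗ[ℝ] E)
    (h : ∃ x, φ x x ≠ 0) : Gen (fun x => φ x x ≠ 0) := by
  refine ⟨h, fun x y hx => ?_⟩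
  obtain ⟨ξ, hξ⟩ : ∃ ξ : Dual ℝ E, ξ (φ x x) ≠ 0 := by
    by_contra! hc
    exact hx ((Module.forall_dual_apply_eq_zero_iff ℝ _).1 hc)
  let q : Polynomial ℝ := Polynomial.C (ξ (φ x x)) + Polynomial.C (ξ (φ x y) + ξ (φ y x)) *
    Polynomial.X + Polynomial.C (ξ (φ y y)) * Polynomial.X ^ 2
  have hq : ∀ t, q.eval t = ξ (φ (x + t • y) (x + t • y)) := by
    intro t; simp [q]; ring
  have hq0 : q ≠ 0 := by
    intro h0
    have := hq 0
    rw [h0] at this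
    simp at this
    exact hξ this.symm
  refine (q.roots.toFinset.finite_toSet).subset ?_
  intro t ht
  simp only [ne_eq, not_not, Set.mem_ofPred_eq] at ht
  simp only [Finset.mem_coe, Multiset.mem_toFinset, Polynomial.mem_roots hq0, Polynomial.IsRoot]
  rw [hq, ht, map_zero]

lemma bound_abs {V E : Type*} [AddCommGroup V] [Module ℝ V] [FiniteDimensional ℝ V]
    [AddCommGroup E] [Module ℝ E] [FiniteDimensional ℝ E] (φ : V →ₗ[ℝ] V →ₗ[ℝ] E)
    (hs : ∀ x y, φ x y = φ y x) (g : ℕ) (hg : g ≤ 2)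
    (hr : ∀ x, finrank ℝ (LinearMap.range (φ x)) ≤ g)
    (hspan : ∀ E₀ : Submodule ℝ E, (∀ x y, φ x y ∈ E₀) → E₀ = ⊤) :
    finrank ℝ E ≤ g * (g + 1) / 2 := by
  by_cases hz : ∃ x, φ x x ≠ 0
  · obtain ⟨⟨X, hX, hXX⟩, -⟩ := (gen_rank φ).and (gen_diag φ hz)
    have hM : ∀ n, φ X n = 0 → ∀ y, φ n y ∈ LinearMap.range (φ X) := by
      intro n hn y
      rw [hs]
      refine moore (φ X) (φ y) (fun t => ?_) n hn
      have := hX (X + t • y)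
      rw [map_add, map_smul] at this
      exact this
    have hrk := LinearMap.finrank_range_add_finrank_ker (φ X)
    have hg' := hr X
    set K := LinearMap.ker (φ X) with hK
    have h1 : K < K ⊔ span ℝ {X} := by
      refine lt_of_le_of_ne le_sup_left ?_
      intro he
      have : X ∈ K := by rw [he]; exact mem_sup_right (mem_span_singleton_self X)
      exact hXX (by simpa [hK] using this)
    have h1' := Submodule.finrank_lt_finrank_of_lt h1
    have hK' : ∀ k ∈ K ⊔ span ℝ {X}, ∀ y, φ k y ∈ LinearMap.range (φ X) := by
      intro k hk y
      obtain ⟨a, ha, b, hb, rfl⟩ := mem_sup.1 hk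
      obtain ⟨c, rfl⟩ := mem_span_singleton.1 hb
      rw [map_add, LinearMap.add_apply]
      refine add_mem (hM a (by simpa [hK] using ha) y) ?_
      simp only [map_smul, LinearMap.smul_apply]
      exact smul_mem _ _ ⟨y, rfl⟩
    by_cases htop : K ⊔ span ℝ {X} = ⊤
    · have := hspan (LinearMap.range (φ X)) (fun x y => hK' x (by rw [htop]; trivial) y)
      rw [this, finrank_top] at hg'
      interval_cases g <;> omega
    · obtain ⟨a, -, ha⟩ := SetLike.exists_of_lt (lt_top_iff_ne_top.2 htop)
      have h2 : K ⊔ span ℝ {X} < (K ⊔ span ℝ {X}) ⊔ span ℝ {a} := by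
        refine lt_of_le_of_ne le_sup_left ?_
        intro he
        apply ha
        rw [he]; exact mem_sup_right (mem_span_singleton_self a)
      have h2' := Submodule.finrank_lt_finrank_of_lt h2
      have h3 := Submodule.finrank_le ((K ⊔ span ℝ {X}) ⊔ span ℝ {a})
      have h4 : (K ⊔ span ℝ {X}) ⊔ span ℝ {a} = ⊤ := by
        apply Submodule.eq_top_of_finrank_eq
        omega
      have h5 := hspan (LinearMap.range (φ X) ⊔ span ℝ {φ a a}) (by
        intro x y
        have hx : x ∈ (K ⊔ span ℝ {X}) ⊔ span ℝ {a} := by rw [h4]; trivial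
        have hy : y ∈ (K ⊔ span ℝ {X}) ⊔ span ℝ {a} := by rw [h4]; trivial
        obtain ⟨k, hk, b, hb, rfl⟩ := mem_sup.1 hx
        obtain ⟨c, rfl⟩ := mem_span_singleton.1 hb
        obtain ⟨k', hk', b', hb', rfl⟩ := mem_sup.1 hy
        obtain ⟨c', rfl⟩ := mem_span_singleton.1 hb'
        have e : φ (k + c • a) (k' + c' • a) =
          (φ k (k' + c' • a) + c • φ k' a) + (c * c') • φ a a := by
          rw [hs k' a]; simp; module
        rw [e]
        refine add_mem (mem_sup_left (add_mem (hK' k hk _) (smul_mem _ _ (hK' k' hk' _)))) ?_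
        exact mem_sup_right (smul_mem _ _ (mem_span_singleton_self _)))
      have h6 := Submodule.finrank_add_le_finrank_add_finrank (LinearMap.range (φ X))
        (span ℝ {φ a a})
      have h7 : finrank ℝ (span ℝ {φ a a}) ≤ 1 :=
        (finrank_span_le_card _).trans (by simp)
      rw [h5, finrank_top] at h6
      interval_cases g <;> omega
  · push Not at hz
    have h0 : ∀ x y, φ x y ∈ (⊥ : Submodule ℝ E) := by
      intro x y
      have := hz (x + y)
      simp [hz, hs y x] at this
      rw [← two_smul ℝ] at this
      simpa using this
    have := hspan ⊥ h0
    have h1 : finrank ℝ E = 0 := by rw [← finrank_top ℝ E, ← this, finrank_bot]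
    omega

lemma iso_dim {W : Type*} [AddCommGroup W] [Module ℝ W] [FiniteDimensional ℝ W]
    (B : LinearMap.BilinForm ℝ W) (r t : ℕ) (h : BilinFormHasType B r t) (I : Submodule ℝ W)
    (hI : ∀ x ∈ I, ∀ y ∈ I, B x y = 0) : finrank ℝ I ≤ r := by
  obtain ⟨b, ho, -, hp⟩ := h
  let f : I →ₗ[ℝ] (Fin r → ℝ) :=
    LinearMap.pi (fun i => (b.coord (Sum.inl i)) ∘ₗ I.subtype)
  have hf : Function.Injective f := by
    rw [← LinearMap.ker_eq_bot, LinearMap.ker_eq_bot']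
    intro x hx
    have hx' : ∀ i, b.repr (x : W) (Sum.inl i) = 0 := fun i => congrFun hx i
    have h0 := hI x x.2 x x.2
    have hsum : B x x = ∑ j, (b.repr (x : W) (Sum.inr j)) ^ 2 *
        B (b (Sum.inr j)) (b (Sum.inr j)) := by
      have e : (x : W) = ∑ j, b.repr (x : W) (Sum.inr j) • b (Sum.inr j) := by
        have e0 := b.sum_repr (x : W)
        rw [Fintype.sum_sum_type] at e0
        simp only [hx', zero_smul, Finset.sum_const_zero, zero_add] at e0
        exact e0.symm
      conv_lhs => rw [e]
      simp only [map_sum, LinearMap.sum_apply, map_smul, LinearMap.smul_apply, smul_eq_mul]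
      refine Finset.sum_congr rfl fun j _ => ?_
      rw [Finset.sum_eq_single j]
      · ring
      · intro k _ hk
        rw [ho _ _ (by simpa using hk)]; simp
      · simp
    rw [h0] at hsum
    have hz := (Finset.sum_eq_zero_iff_of_nonneg (fun j _ =>
      mul_nonneg (sq_nonneg _) (hp j).le)).1 hsum.symm
    have hx2 : ∀ j, b.repr (x : W) (Sum.inr j) = 0 := by
      intro j
      have := hz j (Finset.mem_univ _)
      rcases mul_eq_zero.1 this with h | h
      · simpa using h
      · exact absurd h (hp j).ne'
    have : (x : W) = 0 := by
      apply b.repr.injective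
      ext (i | j)
      · simpa using hx' i
      · simpa using hx2 j
    exact Subtype.ext this
  have := LinearMap.finrank_le_finrank_of_injective hf
  simpa using this

lemma finrank_map_inf {V W : Type*} [AddCommGroup V] [Module ℝ V] [FiniteDimensional ℝ V]
    [AddCommGroup W] [Module ℝ W] (f : V →ₗ[ℝ] W) (N : Submodule ℝ V) :
    finrank ℝ (N.map f) + finrank ℝ (N ⊓ LinearMap.ker f : Submodule ℝ V) = finrank ℝ N := by
  have h := LinearMap.finrank_range_add_finrank_ker (f.domRestrict N)
  rw [LinearMap.range_domRestrict] at h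
  rw [← h]
  congr 1
  have : N ⊓ LinearMap.ker f = (LinearMap.ker (f.domRestrict N)).map N.subtype := by
    ext x; simp
    tauto
  rw [this, finrank_map_subtype_eq]

section
variable {V W : Type*} [AddCommGroup V] [Module ℝ V] [FiniteDimensional ℝ V]
    [AddCommGroup W] [Module ℝ W] [FiniteDimensional ℝ W]

/-- orthogonal complement of the range of `σ Y`. -/
def P (B : LinearMap.BilinForm ℝ W) (σ : V →ₗ[ℝ] V →ₗ[ℝ] W) (Y : V) : Submodule ℝ W :=
  B.orthogonal (LinearMap.range (σ Y))

/-- radical of the range of `σ Y`. -/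
def U (B : LinearMap.BilinForm ℝ W) (σ : V →ₗ[ℝ] V →ₗ[ℝ] W) (Y : V) : Submodule ℝ W :=
  LinearMap.range (σ Y) ⊓ P B σ Y

lemma mem_P {B : LinearMap.BilinForm ℝ W} {σ : V →ₗ[ℝ] V →ₗ[ℝ] W} {Y : V} {w : W} :
    w ∈ P B σ Y ↔ ∀ Z, B (σ Y Z) w = 0 := by
  simp [P]

/-- the maximal rank condition. -/
def Reg (σ : V →ₗ[ℝ] V →ₗ[ℝ] W) (X : V) : Prop :=
  ∀ y, finrank ℝ (LinearMap.range (σ y)) ≤ finrank ℝ (LinearMap.range (σ X))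

/-- `σ` followed by the pairing with a subspace. -/
def phi (B : LinearMap.BilinForm ℝ W) (σ : V →ₗ[ℝ] V →ₗ[ℝ] W) (U' : Submodule ℝ W) :
    V →ₗ[ℝ] V →ₗ[ℝ] Dual ℝ U' :=
  σ.compr₂ (U'.subtype.dualMap ∘ₗ LinearMap.flip B)

lemma phi_apply (B : LinearMap.BilinForm ℝ W) (σ : V →ₗ[ℝ] V →ₗ[ℝ] W) (U' : Submodule ℝ W)
    (Y Z : V) (u : U') : phi B σ U' Y Z u = B u (σ Y Z) := rfl

lemma phi_rank (B : LinearMap.BilinForm ℝ W) (hB : ∀ x y, B x y = B y x)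
    (σ : V →ₗ[ℝ] V →ₗ[ℝ] W) (U' : Submodule ℝ W) (Y : V) :
    finrank ℝ (LinearMap.range (phi B σ U' Y)) + finrank ℝ (U' ⊓ P B σ Y : Submodule ℝ W) =
      finrank ℝ U' := by
  rw [← Subspace.finrank_add_finrank_dualCoannihilator_eq (LinearMap.range (phi B σ U' Y))]
  congr 1
  have : U' ⊓ P B σ Y =
      (LinearMap.range (phi B σ U' Y)).dualCoannihilator.map U'.subtype := by
    ext x
    simp only [mem_inf, mem_P, mem_map, mem_dualCoannihilator, LinearMap.mem_range,
      forall_exists_index, forall_apply_eq_imp_iff, phi_apply, subtype_apply, Subtype.exists,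
      exists_and_right, exists_eq_right]
    constructor
    · rintro ⟨h1, h2⟩
      exact ⟨h1, fun Z => by rw [hB]; exact h2 Z⟩
    · rintro ⟨h1, h2⟩
      exact ⟨h1, fun Z => by rw [hB]; exact h2 Z⟩
  rw [this, finrank_map_subtype_eq]

lemma gen_P (B : LinearMap.BilinForm ℝ W) (hB : ∀ x y, B x y = B y x)
    (σ : V →ₗ[ℝ] V →ₗ[ℝ] W) (U' : Submodule ℝ W) :
    Gen (fun Y => ∀ Y', finrank ℝ (U' ⊓ P B σ Y : Submodule ℝ W) ≤
      finrank ℝ (U' ⊓ P B σ Y' : Submodule ℝ W)) := by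
  have h := gen_rank (phi B σ U')
  have e : (fun Y => ∀ Y', finrank ℝ (U' ⊓ P B σ Y : Submodule ℝ W) ≤
      finrank ℝ (U' ⊓ P B σ Y' : Submodule ℝ W)) =
      (fun x => ∀ y, finrank ℝ (LinearMap.range (phi B σ U' y)) ≤
        finrank ℝ (LinearMap.range (phi B σ U' x))) := by
    funext Y
    apply propext
    refine forall_congr' fun Y' => ?_
    have h1 := phi_rank B hB σ U' Y
    have h2 := phi_rank B hB σ U' Y'
    omega
  rw [e]; exact h

lemma boundA (B : LinearMap.BilinForm ℝ W) (hB : ∀ x y, B x y = B y x)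
    (σ : V →ₗ[ℝ] V →ₗ[ℝ] W) (hσ : ∀ X Y, σ X Y = σ Y X) (U' : Submodule ℝ W)
    (hU : ∀ u ∈ U', (∀ Y Z, B u (σ Y Z) = 0) → u = 0) (g : ℕ) (hg : g ≤ 2)
    (h : ∀ Y, finrank ℝ U' ≤ finrank ℝ (U' ⊓ P B σ Y : Submodule ℝ W) + g) :
    finrank ℝ U' ≤ g * (g + 1) / 2 := by
  rw [← Subspace.dual_finrank_eq (K := ℝ) (V := U')]
  refine bound_abs (phi B σ U') ?_ g hg ?_ ?_
  · intro x y; ext u; rw [phi_apply, phi_apply, hσ]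
  · intro x
    have := phi_rank B hB σ U' x
    have := h x
    omega
  · intro E₀ hE
    have h1 : E₀.dualCoannihilator = ⊥ := by
      rw [eq_bot_iff]
      intro u hu
      rw [mem_dualCoannihilator] at hu
      have := hU u u.2 (fun Y Z => hu _ (hE Y Z))
      simpa using this
    have h2 := Subspace.finrank_add_finrank_dualCoannihilator_eq E₀
    rw [h1, finrank_bot, add_zero, ← Subspace.dual_finrank_eq] at h2
    exact eq_top_of_finrank_eq h2

lemma ker_in_P (B : LinearMap.BilinForm ℝ W)
    (σ : V →ₗ[ℝ] V →ₗ[ℝ] W) (hσ : ∀ X Y, σ X Y = σ Y X)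
    (hflat : ∀ X Y Z U, B (σ X Y) (σ Z U) = B (σ X U) (σ Y Z)) (Y n Z : V) (hn : σ Y n = 0) :
    σ n Z ∈ P B σ Y := by
  rw [mem_P]
  intro A
  rw [hσ Y A, hflat, hn, map_zero]

lemma boundB (B : LinearMap.BilinForm ℝ W) (hB : ∀ x y, B x y = B y x)
    (σ : V →ₗ[ℝ] V →ₗ[ℝ] W) (hσ : ∀ X Y, σ X Y = σ Y X)
    (hflat : ∀ X Y Z U, B (σ X Y) (σ Z U) = B (σ X U) (σ Y Z)) (U' : Submodule ℝ W)
    (hU : ∀ u ∈ U', (∀ Y Z, B u (σ Y Z) = 0) → u = 0) (hd : finrank ℝ U' ≤ 2)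
    (N : Submodule ℝ V) (hN : ∀ n ∈ N, ∀ Y, σ n Y ∈ U') :
    finrank ℝ N ≤ finrank ℝ (⨅ X, LinearMap.ker (σ X) : Submodule ℝ V) + finrank ℝ U' := by
  obtain ⟨Y, hY⟩ : ∃ Y, finrank ℝ (U' ⊓ P B σ Y : Submodule ℝ W) = 0 := by
    by_contra! hc
    have h0 : finrank ℝ (U' ⊓ P B σ 0 : Submodule ℝ W) ≤ finrank ℝ U' :=
      Submodule.finrank_mono inf_le_left
    have h00 := hc 0
    have := boundA B hB σ hσ U' hU (finrank ℝ U' - 1) (by omega) (fun Y => by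
      have := hc Y
      omega)
    generalize finrank ℝ U' = d at *
    interval_cases d <;> omega
  have hY' : U' ⊓ P B σ Y = ⊥ := Submodule.finrank_eq_zero.1 hY
  have h1 := finrank_map_inf (σ Y) N
  have h2 : finrank ℝ (N.map (σ Y)) ≤ finrank ℝ U' := by
    apply Submodule.finrank_mono
    rintro _ ⟨n, hn, rfl⟩
    rw [hσ]; exact hN n hn Y
  have h3 : N ⊓ LinearMap.ker (σ Y) ≤ ⨅ X, LinearMap.ker (σ X) := by
    rintro n ⟨hn, hk⟩
    rw [mem_iInf]
    intro Z
    rw [LinearMap.mem_ker, hσ, ← mem_bot ℝ, ← hY']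
    exact ⟨hN n hn Z, ker_in_P B σ hσ hflat Y n Z hk⟩
  have := Submodule.finrank_mono h3
  omega

/-- The standing hypotheses. -/
structure Hyp (B : LinearMap.BilinForm ℝ W) (σ : V →ₗ[ℝ] V →ₗ[ℝ] W) : Prop where
  hB : ∀ x y, B x y = B y x
  hnd : B.Nondegenerate
  hσ : ∀ X Y, σ X Y = σ Y X
  hflat : ∀ X Y Z U, B (σ X Y) (σ Z U) = B (σ X U) (σ Y Z)
  hS : ∀ u ∈ span ℝ {w | ∃ X Y, σ X Y = w}, (∀ Y Z, B u (σ Y Z) = 0) → u = 0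
  hiso : ∀ I : Submodule ℝ W, (∀ x ∈ I, ∀ y ∈ I, B x y = 0) → finrank ℝ I ≤ 5
  hdim : finrank ℝ (⨅ X, LinearMap.ker (σ X) : Submodule ℝ V) + finrank ℝ W < finrank ℝ V

variable {B : LinearMap.BilinForm ℝ W} {σ : V →ₗ[ℝ] V →ₗ[ℝ] W}

lemma U_le (X : V) : U B σ X ≤ span ℝ {w | ∃ X Y, σ X Y = w} := by
  rintro _ ⟨⟨Z, rfl⟩, -⟩
  exact subset_span ⟨X, Z, rfl⟩

lemma range_P {Y : V} {u v : W} (hu : u ∈ LinearMap.range (σ Y)) (hv : v ∈ P B σ Y) :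
    B u v = 0 := by
  obtain ⟨Z, rfl⟩ := hu
  exact mem_P.1 hv Z

lemma Reg.moore {X : V} (hX : Reg σ X) (hσ : ∀ X Y, σ X Y = σ Y X) (n Z : V)
    (hn : σ X n = 0) : σ n Z ∈ LinearMap.range (σ X) := by
  rw [hσ]
  refine FlatAux.moore (σ X) (σ Z) (fun t => ?_) n hn
  have := hX (X + t • Z)
  rw [map_add, map_smul] at this
  exact this

/-- The sum of two mutually orthogonal isotropic subspaces is isotropic. -/
lemma iso_sup (hB : ∀ x y, B x y = B y x) {I J : Submodule ℝ W}
    (hI : ∀ x ∈ I, ∀ y ∈ I, B x y = 0) (hJ : ∀ x ∈ J, ∀ y ∈ J, B x y = 0)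
    (hIJ : ∀ x ∈ I, ∀ y ∈ J, B x y = 0) : ∀ x ∈ I ⊔ J, ∀ y ∈ I ⊔ J, B x y = 0 := by
  intro x hx y hy
  obtain ⟨a, ha, b, hb, rfl⟩ := mem_sup.1 hx
  obtain ⟨c, hc, d, hd, rfl⟩ := mem_sup.1 hy
  simp [hI a ha c hc, hJ b hb d hd, hIJ a ha d hd, hB b c, hIJ c hc b hb]

lemma U_iso (X : V) : ∀ x ∈ U B σ X, ∀ y ∈ U B σ X, B x y = 0 :=
  fun _ hx _ hy => range_P hx.1 hy.2

lemma good_pair (H : Hyp B σ) (X Y : V) (hX : Reg σ X)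
    (hmin : ∀ X', Reg σ X' → finrank ℝ (U B σ X) ≤ finrank ℝ (U B σ X'))
    (hYr : Reg σ Y) (hY : ∀ Y', finrank ℝ (U B σ X ⊓ P B σ Y : Submodule ℝ W) ≤
      finrank ℝ (U B σ X ⊓ P B σ Y' : Submodule ℝ W)) :
    finrank ℝ (U B σ X) = 3 ∧ finrank ℝ (U B σ X ⊓ P B σ Y : Submodule ℝ W) ≤ 1 ∧
      ∀ u ∈ U B σ X, ∀ v ∈ U B σ Y, B u v = 0 := by
  have hUS : ∀ u ∈ U B σ X, (∀ Y Z, B u (σ Y Z) = 0) → u = 0 :=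
    fun u hu => H.hS u (U_le X hu)
  set N := LinearMap.ker (σ X) with hN
  have hNU : ∀ n ∈ N, ∀ Z, σ n Z ∈ U B σ X := fun n hn Z =>
    ⟨hX.moore H.hσ n Z hn, ker_in_P B σ H.hσ H.hflat X n Z hn⟩
  have hmapU : N.map (σ Y) ≤ U B σ X := by
    rintro _ ⟨n, hn, rfl⟩
    rw [H.hσ]; exact hNU n hn Y
  have hmapL : N.map (σ Y) ≤ LinearMap.range (σ Y) := by
    rintro _ ⟨n, hn, rfl⟩; exact ⟨n, rfl⟩
  -- dimension of `N`
  have hrk := LinearMap.finrank_range_add_finrank_ker (σ X)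
  rw [← hN] at hrk
  have hP : finrank ℝ (P B σ X) = finrank ℝ W - finrank ℝ (LinearMap.range (σ X)) :=
    LinearMap.BilinForm.finrank_orthogonal H.hnd _
  have hle : finrank ℝ (LinearMap.range (σ X)) ≤ finrank ℝ W := Submodule.finrank_le _
  have hUP : finrank ℝ (U B σ X) ≤ finrank ℝ (P B σ X) := Submodule.finrank_mono inf_le_right
  have hdim := H.hdim
  -- the isotropic subspace
  have hJ := H.hiso (N.map (σ Y) ⊔ U B σ Y) (iso_sup H.hB
    (fun x hx y hy => U_iso X x (hmapU hx) y (hmapU hy)) (U_iso Y)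
    (fun x hx y hy => range_P (hmapL hx) hy.2))
  have hJ2 := Submodule.finrank_sup_add_finrank_inf_eq (N.map (σ Y)) (U B σ Y)
  have hJ3 : finrank ℝ (N.map (σ Y) ⊓ U B σ Y : Submodule ℝ W) ≤
      finrank ℝ (U B σ X ⊓ P B σ Y : Submodule ℝ W) :=
    Submodule.finrank_mono (inf_le_inf hmapU inf_le_right)
  have hτY := hmin Y hYr
  have hκ := Submodule.finrank_mono hmapU
  have hker := finrank_map_inf (σ Y) N
  have hUPle : finrank ℝ (U B σ X ⊓ P B σ Y : Submodule ℝ W) ≤ finrank ℝ (U B σ X) :=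
    Submodule.finrank_mono inf_le_left
  have hτ5 := H.hiso (U B σ X) (U_iso X)
  -- bound A
  have hA : ∀ g ≤ 2, finrank ℝ (U B σ X) ≤
      finrank ℝ (U B σ X ⊓ P B σ Y : Submodule ℝ W) + g →
      finrank ℝ (U B σ X) ≤ g * (g + 1) / 2 := by
    intro g hg h
    exact boundA B H.hB σ H.hσ _ hUS g hg (fun Y' => h.trans (by have := hY Y'; omega))
  have hBd : finrank ℝ (U B σ X ⊓ P B σ Y : Submodule ℝ W) ≤ 2 →
      finrank ℝ (N ⊓ LinearMap.ker (σ Y) : Submodule ℝ V) ≤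
      finrank ℝ (⨅ X, LinearMap.ker (σ X) : Submodule ℝ V) +
        finrank ℝ (U B σ X ⊓ P B σ Y : Submodule ℝ W) := fun h =>
    boundB B H.hB σ H.hσ H.hflat _ (fun u hu => hUS u (mem_inf.1 hu).1) h _ (fun n hn Z =>
      ⟨hNU n hn.1 Z, ker_in_P B σ H.hσ H.hflat Y n Z hn.2⟩)
  have hA0 := hA 0 (by norm_num)
  have hA1 := hA 1 (by norm_num)
  have hA2 := hA 2 (by norm_num)
  have key : finrank ℝ (U B σ X) = 3 ∧ finrank ℝ (U B σ X ⊓ P B σ Y : Submodule ℝ W) ≤ 1 ∧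
      finrank ℝ (N.map (σ Y)) = 3 := by
    omega
  refine ⟨key.1, key.2.1, ?_⟩
  have heq : N.map (σ Y) = U B σ X :=
    Submodule.eq_of_le_of_finrank_eq hmapU (by rw [key.1, key.2.2])
  intro u hu v hv
  rw [← heq] at hu
  exact range_P (hmapL hu) hv.2

lemma core (H : Hyp B σ) : False := by
  classical
  have hreg : Gen (Reg σ) := gen_rank σ
  obtain ⟨X, hX, hmin⟩ : ∃ X, Reg σ X ∧
      ∀ X', Reg σ X' → finrank ℝ (U B σ X) ≤ finrank ℝ (U B σ X') := by
    have hne : ∃ d, ∃ X, Reg σ X ∧ finrank ℝ (U B σ X) = d := by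
      obtain ⟨X, hX⟩ := hreg.1
      exact ⟨_, X, hX, rfl⟩
    obtain ⟨X, hX, hd⟩ := Nat.find_spec hne
    refine ⟨X, hX, fun X' hX' => ?_⟩
    rw [hd]
    exact Nat.find_min' hne ⟨X', hX', rfl⟩
  obtain ⟨⟨Y, hYr, hY⟩, -⟩ := hreg.and (gen_P B H.hB σ (U B σ X))
  obtain ⟨h3, h1, horth⟩ := good_pair H X Y hX hmin hYr hY
  have hIso := iso_sup H.hB (U_iso X) (U_iso Y) horth
  have hI5 := H.hiso _ hIso
  have hIeq := Submodule.finrank_sup_add_finrank_inf_eq (U B σ X) (U B σ Y)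
  have hIinf : finrank ℝ (U B σ X ⊓ U B σ Y : Submodule ℝ W) ≤
      finrank ℝ (U B σ X ⊓ P B σ Y : Submodule ℝ W) :=
    Submodule.finrank_mono (inf_le_inf le_rfl inf_le_right)
  have hmY := hmin Y hYr
  have hminY : ∀ X', Reg σ X' → finrank ℝ (U B σ Y) ≤ finrank ℝ (U B σ X') := by
    intro X' hX'
    have := hmin X' hX'
    omega
  set I := U B σ X ⊔ U B σ Y with hI
  obtain ⟨⟨Z, hZr, hZX, hZY, hZI⟩, -⟩ := hreg.and ((gen_P B H.hB σ (U B σ X)).and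
    ((gen_P B H.hB σ (U B σ Y)).and (gen_P B H.hB σ I)))
  obtain ⟨-, -, o1⟩ := good_pair H X Z hX hmin hZr hZX
  obtain ⟨-, -, o2⟩ := good_pair H Y Z hYr hminY hZr hZY
  have o3 : ∀ u ∈ I, ∀ v ∈ U B σ Z, B u v = 0 := by
    intro u hu v hv
    obtain ⟨a, ha, b, hb, rfl⟩ := mem_sup.1 hu
    simp [o1 a ha v hv, o2 b hb v hv]
  have hIZ := H.hiso _ (iso_sup H.hB hIso (U_iso Z) o3)
  have hsub : I = I ⊔ U B σ Z :=
    Submodule.eq_of_le_of_finrank_le le_sup_left (by omega)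
  have hZle : U B σ Z ≤ I ⊓ P B σ Z := by
    refine le_inf ?_ inf_le_right
    rw [hsub]; exact le_sup_right
  have hZ3 := Submodule.finrank_mono hZle
  have hZ3' := hmin Z hZr
  have hIS : I ≤ span ℝ {w | ∃ X Y, σ X Y = w} := sup_le (U_le X) (U_le Y)
  have hfin := boundA B H.hB σ H.hσ I (fun u hu => H.hS u (hIS hu)) 2 le_rfl
    (fun Y' => by
      have := hZI Y'
      omega)
  norm_num at hfin
  omega

end

end FlatAux

/-- Lemma 2.5. Let `V₁`, `W` be finite-dimensional real vector spaces with a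
nondegenerate symmetric bilinear form of type `(r, t)`, `r ≤ 5`, on `W`. If `σ : V₁ × V₁ → W`
is a nonzero flat symmetric bilinear map whose nullity space satisfies
`dim N(σ) < dim V₁ - (r + t)`, then `S(σ)` is a degenerate subspace of `W`. -/
theorem statement1 {V₁ W : Type*} [AddCommGroup V₁] [Module ℝ V₁] [FiniteDimensional ℝ V₁]
    [AddCommGroup W] [Module ℝ W] [FiniteDimensional ℝ W]
    (B : LinearMap.BilinForm ℝ W) (hBsymm : ∀ x y, B x y = B y x)
    (hBnd : B.Nondegenerate) (r t : ℕ) (hr : r ≤ 5) (htype : BilinFormHasType B r t)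
    (σ : V₁ →ₗ[ℝ] V₁ →ₗ[ℝ] W) (hσsymm : ∀ X Y, σ X Y = σ Y X) (hσne : σ ≠ 0)
    (hflat : ∀ X Y Z U, B (σ X Y) (σ Z U) = B (σ X U) (σ Y Z))
    (hnull : finrank ℝ (⨅ X, LinearMap.ker (σ X) : Submodule ℝ V₁) + (r + t) < finrank ℝ V₁) :
    (span ℝ {w | ∃ X Y, σ X Y = w}) ⊓ B.orthogonal (span ℝ {w | ∃ X Y, σ X Y = w}) ≠ ⊥ := by
  intro hdeg
  have hfr : finrank ℝ W = r + t := by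
    obtain ⟨b, -⟩ := htype
    rw [finrank_eq_card_basis b]; simp
  refine FlatAux.core (B := B) (σ := σ) ⟨hBsymm, hBnd, hσsymm, hflat, ?_, ?_, ?_⟩
  · intro u hu h
    rw [← mem_bot ℝ, ← hdeg]
    refine mem_inf.2 ⟨hu, ?_⟩
    rw [LinearMap.BilinForm.mem_orthogonal_iff]
    intro n hn
    induction hn using span_induction with
    | mem x hx =>
      obtain ⟨X, Y, rfl⟩ := hx
      rw [hBsymm]; exact h X Y
    | zero => simp
    | add x y _ _ hx hy => simp [hx, hy]
    | smul a x _ hx => simp [hx]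
  · intro I hI
    exact (FlatAux.iso_dim B r t htype I hI).trans hr
  · omega
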